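/- Let X be a reflexive Banach space, ψ:X→[0,∞] admissible (ψ(0)=0, convex, positively 1-homogeneous, lower semicontinuous, and there is c>0 with c|v| ≤ ψ(v) for all v), and R:[a,b]×X→[0,∞] a ψ-regular functional (for every t, R(t,·) convex, 1-homogeneous, l.s.c., R(t,0)=0; α*ψ ≤ R(t,·) ≤ α*ψ pointwise with 0<α_*≤α*; and |R(t,v)−R(s,v)| ≤ ψ(v)σ(t−s) for a modulus of continuity σ). For f:[a,b]→X, the following are equivalent: (1) f is absolutely continuous and ∫ₐᵇ R(τ, ḟ(τ))dτ < +∞; (2) f is absolutely continuous and ∫ₐᵇ ψ(ḟ(τ))dτ < +∞; (3) there exists a nonnegative m∈L¹(a,b) such that ψ(f(t)−f(s)) ≤ ∫ₛᵗ m(τ)dτ for all a≤s≤t≤b. -/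

import Mathlib

open MeasureTheory Set ENNReal

/-- `f` is absolutely continuous on `[a,b]` with derivative (density) `f'`. -/
def HasACDeriv {X : Type*} [NormedAddCommGroup X] [NormedSpace ℝ X] [CompleteSpace X]
    (a b : ℝ) (f f' : ℝ → X) : Prop :=
  IntervalIntegrable f' MeasureTheory.volume a b ∧
    ∀ t ∈ Set.Icc a b, f t = f a + ∫ τ in a..t, f' τ

open Filter Topology

theorem pettis_aux {Y : Type*} [NormedAddCommGroup Y] [NormedSpace ℝ Y] [CompleteSpace Y]
    [TopologicalSpace.SeparableSpace Y] (μ : Measure ℝ) (g : ℝ → Y)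
    (h : ∀ φ : StrongDual ℝ Y, AEMeasurable (fun t => φ (g t)) μ) :
    AEStronglyMeasurable g μ := by
  borelize Y
  have : SecondCountableTopology Y := UniformSpace.secondCountable_of_separable Y
  have hφ : ∀ n : ℕ, ∃ φ : StrongDual ℝ Y, ‖φ‖ ≤ 1 ∧
      φ (TopologicalSpace.denseSeq Y n) = ‖TopologicalSpace.denseSeq Y n‖ :=
    fun n => exists_dual_vector'' ℝ _
  choose φ hφ1 hφ2 using hφ
  have hemb : MeasurableEmbedding (fun y : Y => fun n : ℕ => φ n y) := by
    apply Continuous.measurableEmbedding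
    · fun_prop
    · intro x x' hxx
      by_contra hne
      have hz : 0 < ‖x - x'‖ := norm_pos_iff.2 (sub_ne_zero.2 hne)
      obtain ⟨n, hn⟩ := Metric.denseRange_iff.1 (TopologicalSpace.denseRange_denseSeq Y)
        (x - x') (‖x - x'‖ / 2) (by positivity)
      set d := TopologicalSpace.denseSeq Y n with hd
      have h0 : φ n (x - x') = 0 := by
        have := congrFun hxx n
        simp only at this
        rw [map_sub, this, sub_self]
      have h1 : ‖d‖ ≤ ‖x - x' - d‖ := by
        calc ‖d‖ = φ n d := by rw [hφ2]
          _ = - φ n (x - x' - d) := by rw [map_sub _ (x - x'), h0]; ring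
          _ ≤ ‖φ n (x - x' - d)‖ := neg_le_abs _
          _ ≤ ‖φ n‖ * ‖x - x' - d‖ := (φ n).le_opNorm _
          _ ≤ 1 * ‖x - x' - d‖ := by gcongr; exact hφ1 n
          _ = _ := one_mul _
      rw [dist_eq_norm] at hn
      have := norm_le_norm_add_norm_sub' (x - x') d
      linarith
  have : AEMeasurable g μ := by
    rw [← hemb.aemeasurable_comp_iff]
    exact aemeasurable_pi_iff.2 fun n => h (φ n)
  exact this.aestronglyMeasurable

theorem weak_ultralimit {X : Type*} [NormedAddCommGroup X] [NormedSpace ℝ X]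
    (hrefl : Function.Surjective (NormedSpace.inclusionInDoubleDual ℝ X))
    (U : Ultrafilter ℕ) (q : ℕ → X) (C : ℝ) (hq : ∀ n, ‖q n‖ ≤ C) :
    ∃ x : X, ∀ φ : StrongDual ℝ X, Tendsto (fun n => φ (q n)) U (𝓝 (φ x)) := by
  have hb : ∀ φ : StrongDual ℝ X, ∀ n, ‖φ (q n)‖ ≤ C * ‖φ‖ := fun φ n => by
    rw [mul_comm]
    exact (φ.le_opNorm _).trans (by gcongr; exact hq n)
  have hex : ∀ φ : StrongDual ℝ X, ∃ l : ℝ, ‖l‖ ≤ C * ‖φ‖ ∧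
      Tendsto (fun n => φ (q n)) U (𝓝 l) := by
    intro φ
    have hc : IsCompact (Metric.closedBall (0:ℝ) (C * ‖φ‖)) := isCompact_closedBall _ _
    obtain ⟨l, hl, hl2⟩ := hc.ultrafilter_le_nhds (U.map fun n => φ (q n)) (by
      rw [Ultrafilter.coe_map, le_principal_iff, mem_map]
      exact Filter.univ_mem' fun n => by simpa using hb φ n)
    exact ⟨l, by simpa using hl, hl2⟩
  choose L hL1 hL2 using hex
  let Λ : StrongDual ℝ X →ₗ[ℝ] ℝ :=
    { toFun := L
      map_add' := fun φ χ => tendsto_nhds_unique (hL2 (φ + χ))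
        (by simpa using (hL2 φ).add (hL2 χ))
      map_smul' := fun r φ => tendsto_nhds_unique (hL2 (r • φ))
        (by simpa using (hL2 φ).const_mul r) }
  obtain ⟨x, hx⟩ := hrefl (Λ.mkContinuous C hL1)
  refine ⟨x, fun φ => ?_⟩
  have : φ x = L φ := by
    have := congrArg (fun T => T φ) hx
    simpa [Λ] using this
  rw [this]
  exact hL2 φ

theorem ac_of_bound (u k : ℝ → ℝ) (C : ℝ) (hk : Integrable k)
    (h : ∀ s t, s ≤ t → |u t - u s| ≤ C * ∫ τ in s..t, k τ) (s t : ℝ) :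
    AbsolutelyContinuousOnInterval u s t := by
  have hG := ((hk.intervalIntegrable (a := s) (b := t)).absolutelyContinuousOnInterval_intervalIntegral
    (c := s) left_mem_uIcc).const_mul C
  refine squeeze_zero (fun _ => Finset.sum_nonneg fun _ _ => dist_nonneg) (fun E => ?_) hG
  refine Finset.sum_le_sum fun i _ => ?_
  generalize (E.2 i).1 = x
  generalize (E.2 i).2 = y
  have key : ∀ x y, x ≤ y → dist (u x) (u y) ≤
      dist (C * ∫ v in s..x, k v) (C * ∫ v in s..y, k v) := by
    intro x y hxy
    rw [dist_comm, dist_comm (C * _), Real.dist_eq, Real.dist_eq, ← mul_sub,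
      intervalIntegral.integral_interval_sub_left hk.intervalIntegrable hk.intervalIntegrable]
    exact (h x y hxy).trans (le_abs_self _)
  rcases le_total x y with hxy | hxy
  · exact key x y hxy
  · rw [dist_comm, dist_comm (C * _)]; exact key y x hxy

theorem tendsto_quot {X : Type*} [NormedAddCommGroup X] [NormedSpace ℝ X] {u : ℝ → X} {l : X}
    {t : ℝ} (h : HasDerivAt u l t) :
    Tendsto (fun n : ℕ => ((n:ℝ) + 1) • (u (t + 1 / ((n:ℝ) + 1)) - u t)) atTop (𝓝 l) := by
  have h1 := h.tendsto_slope_zero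
  have h2 : Tendsto (fun n : ℕ => 1 / ((n:ℝ) + 1)) atTop (𝓝[≠] 0) :=
    tendsto_nhdsWithin_iff.2 ⟨tendsto_one_div_add_atTop_nhds_zero_nat,
      Eventually.of_forall fun n => by
        have : (0:ℝ) < 1 / ((n:ℝ) + 1) := by positivity
        exact this.ne'⟩
  have h3 := h1.comp h2
  refine h3.congr fun n => ?_
  simp

theorem rnp {X : Type*} [NormedAddCommGroup X] [NormedSpace ℝ X] [CompleteSpace X]
    (hrefl : Function.Surjective (NormedSpace.inclusionInDoubleDual ℝ X))
    (f : ℝ → X) (k : ℝ → ℝ) (hk : Integrable k)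
    (h : ∀ s t, s ≤ t → ‖f t - f s‖ ≤ ∫ τ in s..t, k τ) :
    ∃ g : ℝ → X, Integrable g ∧ ∀ s t, f t - f s = ∫ τ in s..t, g τ := by
  classical
  have hfc : Continuous f := by
    have hK : Continuous (fun t => ∫ τ in (0:ℝ)..t, k τ) :=
      intervalIntegral.continuous_primitive (fun _ _ => hk.intervalIntegrable) 0
    rw [continuous_iff_continuousAt]
    intro x
    have hx : Tendsto (fun y => |(∫ τ in (0:ℝ)..y, k τ) - ∫ τ in (0:ℝ)..x, k τ|) (𝓝 x) (𝓝 0) := by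
      have := ((hK.tendsto x).sub_const (∫ τ in (0:ℝ)..x, k τ)).abs
      simpa using this
    rw [ContinuousAt, tendsto_iff_norm_sub_tendsto_zero]
    refine squeeze_zero (fun _ => norm_nonneg _) (fun y => ?_) hx
    rw [intervalIntegral.integral_interval_sub_left hk.intervalIntegrable hk.intervalIntegrable]
    rcases le_total x y with hxy | hxy
    · exact (h x y hxy).trans (le_abs_self _)
    · rw [norm_sub_rev, intervalIntegral.integral_symm, abs_neg]
      exact (h y x hxy).trans (le_abs_self _)
  let Y : Submodule ℝ X := (Submodule.span ℝ (range f)).topologicalClosure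
  have hYc : IsClosed (Y : Set X) := Submodule.isClosed_topologicalClosure _
  have hYs : TopologicalSpace.IsSeparable (Y : Set X) := by
    rw [Submodule.topologicalClosure_coe]
    exact ((TopologicalSpace.isSeparable_range hfc).span (R := ℝ)).closure
  have hfY : ∀ t, f t ∈ Y := fun t =>
    Submodule.le_topologicalClosure _ (Submodule.subset_span (mem_range_self t))
  let U : Ultrafilter ℕ := hyperfilter ℕ
  have hU : (U : Filter ℕ) ≤ atTop := Nat.hyperfilter_le_atTop
  let q : ℝ → ℕ → X := fun t n => ((n:ℝ) + 1) • (f (t + 1 / ((n:ℝ) + 1)) - f t)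
  have hKd : ∀ᵐ t, HasDerivAt (fun t => ∫ τ in (0:ℝ)..t, k τ) (k t) t := by
    filter_upwards [LocallyIntegrable.ae_hasDerivAt_integral hk.locallyIntegrable] with t ht using ht 0
  let r : ℝ → ℕ → ℝ := fun t n => ((n:ℝ) + 1) •
    ((∫ τ in (0:ℝ)..(t + 1 / ((n:ℝ) + 1)), k τ) - ∫ τ in (0:ℝ)..t, k τ)
  have hqr : ∀ t n, ‖q t n‖ ≤ r t n := by
    intro t n
    have hp : (0:ℝ) < (n:ℝ) + 1 := by positivity
    simp only [q, r]
    rw [norm_smul, Real.norm_of_nonneg hp.le, smul_eq_mul,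
      intervalIntegral.integral_interval_sub_left hk.intervalIntegrable hk.intervalIntegrable]
    gcongr
    exact h _ _ (by have : (0:ℝ) < 1 / ((n:ℝ) + 1) := by positivity
                    linarith)
  have hlim : ∀ᵐ t, ∃ x : X, ∀ φ : StrongDual ℝ X,
      Tendsto (fun n => φ (q t n)) U (𝓝 (φ x)) := by
    filter_upwards [hKd] with t ht
    obtain ⟨C, hC⟩ := (tendsto_quot ht).bddAbove_range
    exact weak_ultralimit hrefl U (q t) C fun n => (hqr t n).trans (hC (mem_range_self n))
  let g : ℝ → X := fun t => if hx : ∃ x : X, ∀ φ : StrongDual ℝ X,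
      Tendsto (fun n => φ (q t n)) U (𝓝 (φ x)) then hx.choose else 0
  have hg : ∀ᵐ t, ∀ φ : StrongDual ℝ X, Tendsto (fun n => φ (q t n)) U (𝓝 (φ (g t))) := by
    filter_upwards [hlim] with t ht
    simp only [g, dif_pos ht]
    exact ht.choose_spec
  have hqY : ∀ t n, q t n ∈ Y := fun t n => Y.smul_mem _ (Y.sub_mem (hfY _) (hfY _))
  have hgY : ∀ t, g t ∈ Y := by
    intro t
    by_cases ht : ∃ x : X, ∀ φ : StrongDual ℝ X, Tendsto (fun n => φ (q t n)) U (𝓝 (φ x))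
    · simp only [g, dif_pos ht]
      have hs := ht.choose_spec
      generalize ht.choose = x at hs
      by_contra hx
      obtain ⟨φ, u, h1, h2⟩ := geometric_hahn_banach_closed_point Y.convex hYc hx
      exact absurd (le_of_tendsto (hs φ) (Eventually.of_forall fun n => (h1 _ (hqY t n)).le))
        (not_le.2 h2)
    · simp only [g, dif_neg ht]
      exact Y.zero_mem
  have hφac : ∀ φ : StrongDual ℝ X, ∀ s t,
      AbsolutelyContinuousOnInterval (fun t => φ (f t)) s t := by
    intro φ
    refine ac_of_bound _ k ‖φ‖ hk fun s t hst => ?_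
    rw [← map_sub]
    exact (φ.le_opNorm _).trans (by gcongr; exact h s t hst)
  have hφd : ∀ φ : StrongDual ℝ X, ∀ᵐ t, φ (g t) = deriv (fun t => φ (f t)) t := by
    intro φ
    have hd : ∀ᵐ t, ∀ N : ℕ, t ∈ uIcc (-(N:ℝ)) N → DifferentiableAt ℝ (fun t => φ (f t)) t :=
      ae_all_iff.2 fun N => (hφac φ _ _).ae_differentiableAt
    filter_upwards [hd, hg] with t ht hgt
    obtain ⟨N, hN⟩ := exists_nat_ge |t|
    have hd := (ht N (by
      rw [uIcc_of_le (by have := abs_nonneg t; linarith)]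
      exact abs_le.1 hN)).hasDerivAt
    refine tendsto_nhds_unique (hgt φ) (((tendsto_quot hd).mono_left hU).congr fun n => ?_)
    simp [q]
  have hgm : AEStronglyMeasurable g := by
    have : TopologicalSpace.SeparableSpace Y := hYs.separableSpace
    have : CompleteSpace Y := hYc.completeSpace_coe
    have := pettis_aux volume (fun t => (⟨g t, hgY t⟩ : Y)) (fun φ => by
      obtain ⟨χ, hχ, -⟩ := exists_extension_norm_eq Y φ
      have : (fun t => φ ⟨g t, hgY t⟩) = fun t => χ (g t) := by
        ext t; rw [← hχ]
      rw [this]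
      exact (measurable_deriv _).aemeasurable.congr ((hφd χ).mono fun t ht => ht.symm))
    exact continuous_subtype_val.comp_aestronglyMeasurable this
  have hgb : ∀ᵐ t, ‖g t‖ ≤ k t := by
    filter_upwards [hKd, hg] with t ht hgt
    obtain ⟨φ, hφ1, hφ2⟩ := exists_dual_vector'' ℝ (g t)
    have h2 : φ (g t) = ‖g t‖ := hφ2
    rw [← h2]
    refine le_of_tendsto_of_tendsto (hgt φ) ((tendsto_quot ht).mono_left hU)
      (Eventually.of_forall fun n => ?_)
    calc φ (q t n) ≤ ‖φ (q t n)‖ := le_abs_self _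
      _ ≤ ‖φ‖ * ‖q t n‖ := φ.le_opNorm _
      _ ≤ 1 * ‖q t n‖ := by gcongr
      _ ≤ r t n := by rw [one_mul]; exact hqr t n
  have hgi : Integrable g := hk.mono' hgm hgb
  refine ⟨g, hgi, fun s t => ?_⟩
  refine (SeparatingDual.eq_iff_forall_dual_eq (R := ℝ)).2 fun φ => ?_
  rw [← ContinuousLinearMap.intervalIntegral_comp_comm φ hgi.intervalIntegrable, map_sub,
    ← (hφac φ s t).integral_deriv_eq_sub]
  exact intervalIntegral.integral_congr_ae ((hφd φ).mono fun t ht _ => ht.symm)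

theorem jensen_aux {X : Type*} [NormedAddCommGroup X] [NormedSpace ℝ X] [CompleteSpace X]
    (ψ : X → ℝ≥0∞)
    (hψconv : ∀ u v : X, ∀ θ : ℝ, θ ∈ Icc (0:ℝ) 1 →
      ψ (θ • u + (1 - θ) • v) ≤ ENNReal.ofReal θ * ψ u + ENNReal.ofReal (1 - θ) * ψ v)
    (hψhom : ∀ l : ℝ, 0 < l → ∀ v : X, ψ (l • v) = ENNReal.ofReal l * ψ v)
    (hψlsc : LowerSemicontinuous ψ) (g : ℝ → X) (m : ℝ → ℝ) (s t : ℝ) (hst : s < t)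
    (hg : IntegrableOn g (Ioc s t)) (hm : IntegrableOn m (Ioc s t)) (hm0 : ∀ τ, 0 ≤ m τ)
    (hb : ∀ᵐ τ ∂(volume.restrict (Ioc s t)), ψ (g τ) ≤ ENNReal.ofReal (m τ)) :
    ψ (∫ τ in s..t, g τ) ≤ ENNReal.ofReal (∫ τ in s..t, m τ) := by
  let E : Set (X × ℝ) := {p | ψ p.1 ≤ ENNReal.ofReal p.2} ∩ {p | 0 ≤ p.2}
  have hEc : IsClosed E := by
    refine IsClosed.inter ?_ (isClosed_le continuous_const continuous_snd)
    exact hψlsc.isClosed_epigraph.preimage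
      (f := fun p : X × ℝ => (p.1, ENNReal.ofReal p.2))
      (continuous_fst.prodMk (ENNReal.continuous_ofReal.comp continuous_snd))
  have hEv : Convex ℝ E := by
    rintro ⟨u, x⟩ ⟨hu, hx⟩ ⟨v, y⟩ ⟨hv, hy⟩ α β hα hβ hαβ
    simp only [mem_ofPred_eq] at hu hx hv hy
    obtain rfl : β = 1 - α := by linarith
    refine ⟨?_, ?_⟩
    · simp only [mem_ofPred_eq, Prod.smul_mk, Prod.mk_add_mk, smul_eq_mul]
      refine (hψconv u v α ⟨hα, by linarith⟩).trans ?_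
      rw [ENNReal.ofReal_add (by positivity) (by positivity), ENNReal.ofReal_mul hα,
        ENNReal.ofReal_mul hβ]
      gcongr
    · simp only [mem_ofPred_eq, Prod.smul_mk, Prod.mk_add_mk, smul_eq_mul]
      positivity
  have hv : volume (Ioc s t) ≠ 0 := by
    rw [Real.volume_Ioc]; simpa using hst
  have hmem := hEv.set_average_mem hEc (μ := volume) (t := Ioc s t) (f := fun τ => (g τ, m τ))
    hv (by simp) (hb.mono fun τ hτ => ⟨hτ, hm0 τ⟩) (hg.prodMk hm)
  rw [average_pair hg hm] at hmem
  have h1 := hmem.1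
  simp only [mem_ofPred_eq] at h1
  rw [setAverage_eq, setAverage_eq, ← intervalIntegral.integral_of_le hst.le,
    ← intervalIntegral.integral_of_le hst.le, Real.volume_real_Ioc_of_le hst.le] at h1
  have hd : 0 < t - s := sub_pos.2 hst
  calc ψ (∫ τ in s..t, g τ) = ψ ((t - s) • (t - s)⁻¹ • ∫ τ in s..t, g τ) := by
        rw [smul_inv_smul₀ hd.ne']
    _ = ENNReal.ofReal (t - s) * ψ ((t - s)⁻¹ • ∫ τ in s..t, g τ) := hψhom _ hd _
    _ ≤ ENNReal.ofReal (t - s) * ENNReal.ofReal ((t - s)⁻¹ • ∫ τ in s..t, m τ) := by gcongr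
    _ = ENNReal.ofReal (∫ τ in s..t, m τ) := by
        rw [← ENNReal.ofReal_mul hd.le, smul_eq_mul, mul_inv_cancel_left₀ hd.ne']

theorem two_imp_three {X : Type*} [NormedAddCommGroup X] [NormedSpace ℝ X] [CompleteSpace X]
    (a b : ℝ) (hab : a ≤ b) (ψ : X → ℝ≥0∞) (hψ0 : ψ 0 = 0)
    (hψconv : ∀ u v : X, ∀ θ : ℝ, θ ∈ Icc (0:ℝ) 1 →
      ψ (θ • u + (1 - θ) • v) ≤ ENNReal.ofReal θ * ψ u + ENNReal.ofReal (1 - θ) * ψ v)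
    (hψhom : ∀ l : ℝ, 0 < l → ∀ v : X, ψ (l • v) = ENNReal.ofReal l * ψ v)
    (hψlsc : LowerSemicontinuous ψ) (f f' : ℝ → X) (hf : HasACDeriv a b f f')
    (hfin : (∫⁻ τ in Icc a b, ψ (f' τ)) < ⊤) :
    ∃ m : ℝ → ℝ, (∀ τ, 0 ≤ m τ) ∧ IntervalIntegrable m MeasureTheory.volume a b ∧
          ∀ s t : ℝ, a ≤ s → s ≤ t → t ≤ b →
            ψ (f t - f s) ≤ ENNReal.ofReal (∫ τ in s..t, m τ) := by
  obtain ⟨hi, hf⟩ := hf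
  have hio : IntegrableOn f' (Ioc a b) := (intervalIntegrable_iff_integrableOn_Ioc_of_le hab).1 hi
  have hfin' : (∫⁻ τ in Ioc a b, ψ (f' τ)) ≠ ⊤ :=
    ((lintegral_mono_set Ioc_subset_Icc_self).trans_lt hfin).ne
  have hmeas : AEMeasurable (fun τ => ψ (f' τ)) (volume.restrict (Ioc a b)) := by
    borelize X
    exact hψlsc.measurable.comp_aemeasurable hio.aestronglyMeasurable.aemeasurable
  have hmi : IntegrableOn (fun τ => (ψ (f' τ)).toReal) (Ioc a b) :=
    integrable_toReal_of_lintegral_ne_top hmeas hfin'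
  have hlt := ae_lt_top' hmeas hfin'
  refine ⟨fun τ => (ψ (f' τ)).toReal, fun _ => toReal_nonneg,
    (intervalIntegrable_iff_integrableOn_Ioc_of_le hab).2 hmi, fun s t has hst htb => ?_⟩
  rcases hst.eq_or_lt with rfl | hst'
  · simp [hψ0]
  have hsub : Ioc s t ⊆ Ioc a b := Ioc_subset_Ioc has htb
  have hfs : f t - f s = ∫ τ in s..t, f' τ := by
    rw [hf t ⟨has.trans hst, htb⟩, hf s ⟨has, hst.trans htb⟩, add_sub_add_left_eq_sub]
    apply intervalIntegral.integral_interval_sub_left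
    · exact (intervalIntegrable_iff_integrableOn_Ioc_of_le (has.trans hst)).2
        (hio.mono_set (Ioc_subset_Ioc_right htb))
    · exact (intervalIntegrable_iff_integrableOn_Ioc_of_le has).2
        (hio.mono_set (Ioc_subset_Ioc_right (hst.trans htb)))
  rw [hfs]
  refine jensen_aux ψ hψconv hψhom hψlsc f' _ s t hst' (hio.mono_set hsub) (hmi.mono_set hsub)
    (fun _ => toReal_nonneg) ?_
  filter_upwards [ae_restrict_of_ae_restrict_of_subset hsub hlt] with τ hτ
  rw [ENNReal.ofReal_toReal hτ.ne]

theorem three_imp_two {X : Type*} [NormedAddCommGroup X] [NormedSpace ℝ X] [CompleteSpace X]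
    (hrefl : Function.Surjective (NormedSpace.inclusionInDoubleDual ℝ X))
    (a b : ℝ) (hab : a ≤ b) (ψ : X → ℝ≥0∞) (c : ℝ) (hc : 0 < c)
    (hψhom : ∀ l : ℝ, 0 < l → ∀ v : X, ψ (l • v) = ENNReal.ofReal l * ψ v)
    (hψlsc : LowerSemicontinuous ψ)
    (hψcoer : ∀ v : X, ENNReal.ofReal (c * ‖v‖) ≤ ψ v)
    (f : ℝ → X) (m : ℝ → ℝ) (hm0 : ∀ τ, 0 ≤ m τ) (hm : IntervalIntegrable m volume a b)
    (h : ∀ s t : ℝ, a ≤ s → s ≤ t → t ≤ b →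
            ψ (f t - f s) ≤ ENNReal.ofReal (∫ τ in s..t, m τ)) :
    ∃ f', HasACDeriv a b f f' ∧ (∫⁻ τ in Icc a b, ψ (f' τ)) < ⊤ := by
  have hmo : IntegrableOn m (Ioc a b) := (intervalIntegrable_iff_integrableOn_Ioc_of_le hab).1 hm
  let k : ℝ → ℝ := (Ioc a b).indicator fun τ => c⁻¹ * m τ
  have hk : Integrable k := (integrable_indicator_iff measurableSet_Ioc).2 (hmo.const_mul c⁻¹)
  have hk0 : ∀ τ, 0 ≤ k τ := fun τ =>
    indicator_nonneg (fun τ _ => mul_nonneg (inv_nonneg.2 hc.le) (hm0 τ)) τ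
  let P : ℝ → ℝ := fun t => max a (min b t)
  have hPa : ∀ t, a ≤ P t := fun t => le_max_left _ _
  have hPb : ∀ t, P t ≤ b := fun t => max_le hab (min_le_left _ _)
  have hPm : ∀ s t, s ≤ t → P s ≤ P t := fun s t hst =>
    max_le_max le_rfl (min_le_min le_rfl hst)
  have hPid : ∀ t ∈ Icc a b, P t = t := fun t ht => by
    simp only [P, min_eq_right ht.2, max_eq_right ht.1]
  have hbound : ∀ s t, s ≤ t → ‖f (P t) - f (P s)‖ ≤ ∫ τ in s..t, k τ := by
    intro s t hst
    have h1 := (hψcoer _).trans (h (P s) (P t) (hPa s) (hPm s t hst) (hPb t))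
    rw [ENNReal.ofReal_le_ofReal_iff
      (intervalIntegral.integral_nonneg (hPm s t hst) fun τ _ => hm0 τ)] at h1
    have h2 : ‖f (P t) - f (P s)‖ ≤ ∫ τ in P s..P t, c⁻¹ * m τ := by
      rw [intervalIntegral.integral_const_mul, inv_mul_eq_div, le_div_iff₀' hc]
      exact h1
    refine h2.trans ?_
    rw [intervalIntegral.integral_of_le (hPm s t hst), intervalIntegral.integral_of_le hst]
    have h3 : ∫ τ in Ioc (P s) (P t), c⁻¹ * m τ = ∫ τ in Ioc (P s) (P t), k τ := by
      refine setIntegral_congr_fun measurableSet_Ioc fun τ hτ => ?_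
      have hmem : τ ∈ Ioc a b := ⟨(hPa s).trans_lt hτ.1, hτ.2.trans (hPb t)⟩
      simp only [k, indicator_of_mem hmem]
    rw [h3]
    refine setIntegral_mono_set hk.integrableOn (Eventually.of_forall hk0)
      (LE.le.eventuallyLE ?_)
    intro x hx
    simp only [P, mem_Ioc] at hx ⊢
    grind
  obtain ⟨g, hgi, hg⟩ := rnp hrefl (fun t => f (P t)) k hk hbound
  have hgf : ∀ s ∈ Icc a b, ∀ t ∈ Icc a b, f t - f s = ∫ τ in s..t, g τ := by
    intro s hs t ht
    rw [← hg s t, hPid s hs, hPid t ht]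
  refine ⟨g, ⟨hgi.intervalIntegrable, fun t ht => ?_⟩, ?_⟩
  · rw [← hgf a ⟨le_rfl, hab⟩ t ht]; abel
  have hae : ∀ᵐ τ, τ ∈ Ioc a b → ψ (g τ) ≤ ENNReal.ofReal (m τ) := by
    have hnb : ∀ᵐ x : ℝ, x ≠ b := by simp [ae_iff, measure_singleton]
    filter_upwards [hnb, IntervalIntegrable.ae_hasDerivAt_integral hm,
      LocallyIntegrable.ae_hasDerivAt_integral hgi.locallyIntegrable] with t htb hmd hgd ht
    have htI : t ∈ Icc a b := Ioc_subset_Icc_self ht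
    have hmd := tendsto_quot (hmd (by rwa [uIcc_of_le hab]) a left_mem_uIcc)
    have hgd := tendsto_quot (hgd a)
    have hlt : t < b := lt_of_le_of_ne ht.2 htb
    have hev : ∀ᶠ n : ℕ in atTop, 1 / ((n:ℝ) + 1) < b - t :=
      tendsto_one_div_add_atTop_nhds_zero_nat.eventually_lt_const (sub_pos.2 hlt)
    have hcl := hψlsc.isClosed_epigraph
    have := hcl.mem_of_tendsto
      (hgd.prodMk_nhds ((ENNReal.continuous_ofReal.tendsto _).comp hmd)) ?_
    · exact this
    filter_upwards [hev] with n hn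
    have hp : (0:ℝ) < (n:ℝ) + 1 := by positivity
    have hp' : (0:ℝ) < 1 / ((n:ℝ) + 1) := by positivity
    have htI' : t + 1 / ((n:ℝ) + 1) ∈ Icc a b := ⟨by linarith [htI.1], by linarith⟩
    have hsubi : ∀ x ∈ Icc a b, IntervalIntegrable m volume a x := fun x hx =>
      (intervalIntegrable_iff_integrableOn_Ioc_of_le hx.1).2
        (hmo.mono_set (Ioc_subset_Ioc_right hx.2))
    simp only [Function.comp]
    rw [intervalIntegral.integral_interval_sub_left hgi.intervalIntegrable hgi.intervalIntegrable,
      intervalIntegral.integral_interval_sub_left (hsubi _ htI') (hsubi _ htI),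
      ← hgf t htI _ htI', hψhom _ hp, smul_eq_mul, ENNReal.ofReal_mul hp.le]
    gcongr
    exact h _ _ htI.1 (by linarith) htI'.2
  rw [← restrict_Ioc_eq_restrict_Icc]
  refine (lintegral_mono_ae ((ae_restrict_iff' measurableSet_Ioc).2 hae)).trans_lt ?_
  exact hmo.lintegral_lt_top

theorem stmt7
    {X : Type*} [NormedAddCommGroup X] [NormedSpace ℝ X] [CompleteSpace X]
    (hrefl : Function.Surjective (NormedSpace.inclusionInDoubleDual ℝ X))
    (a b : ℝ) (hab : a ≤ b)
    -- `ψ` is admissible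
    (ψ : X → ℝ≥0∞) (c : ℝ) (hc : 0 < c)
    (hψ0 : ψ 0 = 0)
    (hψconv : ∀ u v : X, ∀ θ : ℝ, θ ∈ Icc (0:ℝ) 1 →
      ψ (θ • u + (1 - θ) • v) ≤ ENNReal.ofReal θ * ψ u + ENNReal.ofReal (1 - θ) * ψ v)
    (hψhom : ∀ l : ℝ, 0 < l → ∀ v : X, ψ (l • v) = ENNReal.ofReal l * ψ v)
    (hψlsc : LowerSemicontinuous ψ)
    (hψcoer : ∀ v : X, ENNReal.ofReal (c * ‖v‖) ≤ ψ v)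
    -- `R` is `ψ`-regular
    (R : ℝ → X → ℝ≥0∞) (αl αu : ℝ) (hαl : 0 < αl) (hαlu : αl ≤ αu)
    (hRconv : ∀ t ∈ Icc a b, ∀ u v : X, ∀ θ : ℝ, θ ∈ Icc (0:ℝ) 1 →
      R t (θ • u + (1 - θ) • v) ≤ ENNReal.ofReal θ * R t u + ENNReal.ofReal (1 - θ) * R t v)
    (hRhom : ∀ t ∈ Icc a b, ∀ l : ℝ, 0 < l → ∀ v : X, R t (l • v) = ENNReal.ofReal l * R t v)
    (hRlsc : ∀ t ∈ Icc a b, LowerSemicontinuous (R t))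
    (hR0 : ∀ t ∈ Icc a b, R t 0 = 0)
    (hRlow : ∀ t ∈ Icc a b, ∀ v : X, ENNReal.ofReal αl * ψ v ≤ R t v)
    (hRup : ∀ t ∈ Icc a b, ∀ v : X, R t v ≤ ENNReal.ofReal αu * ψ v)
    (σ : ℝ → ℝ) (hσcont : ContinuousOn σ (Icc 0 (b - a)))
    (hσmono : MonotoneOn σ (Icc 0 (b - a)))
    (hσ0 : σ 0 = 0) (hσnonneg : ∀ s : ℝ, 0 ≤ σ s)
    (hRtime : ∀ s t : ℝ, a ≤ s → s ≤ t → t ≤ b → ∀ v : X, ψ v ≠ ⊤ →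
      R t v ≤ R s v + ψ v * ENNReal.ofReal (σ (t - s)) ∧
        R s v ≤ R t v + ψ v * ENNReal.ofReal (σ (t - s)))
    (f : ℝ → X) :
    ((∃ f', HasACDeriv a b f f' ∧ (∫⁻ τ in Icc a b, R τ (f' τ)) < ⊤)
      ↔ (∃ f', HasACDeriv a b f f' ∧ (∫⁻ τ in Icc a b, ψ (f' τ)) < ⊤))
    ∧
    ((∃ f', HasACDeriv a b f f' ∧ (∫⁻ τ in Icc a b, R τ (f' τ)) < ⊤)
      ↔ (∃ m : ℝ → ℝ, (∀ τ, 0 ≤ m τ) ∧ IntervalIntegrable m MeasureTheory.volume a b ∧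
          ∀ s t : ℝ, a ≤ s → s ≤ t → t ≤ b →
            ψ (f t - f s) ≤ ENNReal.ofReal (∫ τ in s..t, m τ))) := by
  have hαu : 0 < αu := hαl.trans_le hαlu
  have h12 : (∃ f', HasACDeriv a b f f' ∧ (∫⁻ τ in Icc a b, R τ (f' τ)) < ⊤)
      ↔ (∃ f', HasACDeriv a b f f' ∧ (∫⁻ τ in Icc a b, ψ (f' τ)) < ⊤) := by
    constructor
    · rintro ⟨f', hf', hfin⟩
      refine ⟨f', hf', ?_⟩
      have h1 : ENNReal.ofReal αl * (∫⁻ τ in Icc a b, ψ (f' τ)) < ⊤ := by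
        rw [← lintegral_const_mul' _ _ ENNReal.ofReal_ne_top]
        exact (setLIntegral_mono' measurableSet_Icc fun τ hτ => hRlow τ hτ _).trans_lt hfin
      by_contra hcon
      rw [not_lt, top_le_iff] at hcon
      rw [hcon, ENNReal.mul_top (by simpa using hαl)] at h1
      exact lt_irrefl _ h1
    · rintro ⟨f', hf', hfin⟩
      refine ⟨f', hf', ?_⟩
      refine (setLIntegral_mono' measurableSet_Icc fun τ hτ => hRup τ hτ _).trans_lt ?_
      rw [lintegral_const_mul' _ _ ENNReal.ofReal_ne_top]
      exact ENNReal.mul_lt_top ENNReal.ofReal_lt_top hfin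
  refine ⟨h12, h12.trans ⟨?_, ?_⟩⟩
  · rintro ⟨f', hf', hfin⟩
    exact two_imp_three a b hab ψ hψ0 hψconv hψhom hψlsc f f' hf' hfin
  · rintro ⟨m, hm0, hm, h⟩
    exact three_imp_two hrefl a b hab ψ c hc hψhom hψlsc hψcoer f m hm0 hm h
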